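/- The spaces ARI_{al/al} (underlined) and ARI_{al*al} (underlined) are Lie subalgebras of ARI under the ari-bracket; moreover the ari-bracket of two elements of ARI_{al*al} lies in ARI_{al/al}. -/

import Mathlib

open List

variable {K : Type*} [Field K] [CharZero K]

/-- The multiset (as a list, with multiplicity) of shuffles of two words. -/
def shuffles {α : Type*} : List α → List α → List (List α)
  | [], v => [v]
  | u, [] => [u]
  | x :: u, y :: v =>
      ((shuffles u (y :: v)).map (x :: ·)) ++ ((shuffles (x :: u) v).map (y :: ·))
  termination_by u v => u.length + v.length

/-- A mould (at the level of evaluations) is alternal if all its shuffle sums over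
pairs of nonempty words vanish. -/
def Alternal (A : List K → K) : Prop :=
  ∀ u v : List K, u ≠ [] → v ≠ [] → ((shuffles u v).map A).sum = 0

/-- mould multiplication `mu`. -/
def mu (A B : List K → K) : List K → K :=
  fun w => ∑ k ∈ Finset.range (w.length + 1), A (w.take k) * B (w.drop k)

/-- `lu(A,B) = mu(A,B) - mu(B,A)`. -/
def lu (A B : List K → K) : List K → K :=
  fun w => mu A B w - mu B A w

/-- All decompositions of a word into two consecutive subwords. -/
def splits2 {α : Type*} (w : List α) : List (List α × List α) :=
  (List.range (w.length + 1)).map fun k => (w.take k, w.drop k)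

/-- All decompositions of a word into three consecutive subwords. -/
def splits3 {α : Type*} (w : List α) : List (List α × List α × List α) :=
  (splits2 w).flatMap fun p => (splits2 p.2).map fun q => (p.1, q.1, q.2)

/-- Add `s` to the first letter of a word. -/
def addFirst (s : K) : List K → List K
  | [] => []
  | x :: xs => (x + s) :: xs

/-- Add `s` to the last letter of a word. -/
def addLast (s : K) : List K → List K
  | [] => []
  | [x] => [x + s]
  | x :: xs => x :: addLast s xs

/-- `amit` for u-moulds: `(amit(B)·A)(w) = Σ_{w=abc, b,c≠∅} A(a⌈c) B(b)`. -/
def amitU (B A : List K → K) : List K → K := fun w =>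
  ((splits3 w).map fun p =>
    match p with
    | (_, [], _) => 0
    | (_, _, []) => 0
    | (a, b, c) => A (a ++ addFirst b.sum c) * B b).sum

/-- `anit` for u-moulds: `(anit(B)·A)(w) = Σ_{w=abc, a,b≠∅} A(a⌉c) B(b)`. -/
def anitU (B A : List K → K) : List K → K := fun w =>
  ((splits3 w).map fun p =>
    match p with
    | ([], _, _) => 0
    | (_, [], _) => 0
    | (a, b, c) => A (addLast b.sum a ++ c) * B b).sum

/-- `arit(B)·A = amit(B)·A - anit(B)·A` on u-moulds. -/
def aritU (B A : List K → K) : List K → K :=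
  fun w => amitU B A w - anitU B A w

/-- the ari bracket on u-moulds. -/
def ariU (A B : List K → K) : List K → K :=
  fun w => aritU B A w + lu A B w - aritU A B w

/-- `amit` for v-moulds. -/
def amitV (B A : List K → K) : List K → K := fun w =>
  ((splits3 w).map fun p =>
    match p with
    | (_, [], _) => 0
    | (_, _, []) => 0
    | (a, b, c0 :: c') => A (a ++ c0 :: c') * B (b.map (fun x => x - c0))).sum

/-- `anit` for v-moulds. -/
def anitV (B A : List K → K) : List K → K := fun w =>
  ((splits3 w).map fun p =>
    match p with
    | ([], _, _) => 0
    | (_, [], _) => 0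
    | (a, b, c) => A (a ++ c) * B (b.map (fun x => x - a.getLastD 0))).sum

/-- `arit(B)·A = amit(B)·A - anit(B)·A` on v-moulds. -/
def aritV (B A : List K → K) : List K → K :=
  fun w => amitV B A w - anitV B A w

/-- the ari bracket on v-moulds. -/
def ariV (A B : List K → K) : List K → K :=
  fun w => aritV B A w + lu A B w - aritV A B w

/-- `neg(A)(u_1,...,u_r) = A(-u_1,...,-u_r)`. -/
def negM (A : List K → K) : List K → K := fun w => A (w.map fun x => -x)

/-- `push(A)(u_1,...,u_r) = A(-u_1-⋯-u_r, u_1, ..., u_{r-1})`. -/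
def pushM (A : List K → K) : List K → K := fun w =>
  match w with
  | [] => A []
  | _ :: _ => A ((-w.sum) :: w.dropLast)

/-- `mantar(A)(u_1,...,u_r) = (-1)^{r-1} A(u_r,...,u_1)`. -/
def mantarM (A : List K → K) : List K → K :=
  fun w => (-1 : K) ^ (w.length + 1) * A w.reverse

/-- argument list for swap from u-moulds to v-moulds:
`(v_1,...,v_r) ↦ (v_r, v_{r-1}-v_r, ..., v_1-v_2)`. -/
def swapUargs (w : List K) : List K :=
  List.zipWith (· - ·) w.reverse (0 :: w.reverse)

/-- argument list for swap from v-moulds to u-moulds: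
`(u_1,...,u_r) ↦ (u_1+⋯+u_r, u_1+⋯+u_{r-1}, ..., u_1)`. -/
def swapVargs (w : List K) : List K :=
  (List.range w.length).map fun i => (w.take (w.length - i)).sum

/-- swap, sending a u-mould to a v-mould. -/
def swapUV (A : List K → K) : List K → K := fun w => A (swapUargs w)

/-- swap, sending a v-mould to a u-mould. -/
def swapVU (A : List K → K) : List K → K := fun w => A (swapVargs w)

/-- A constant-valued mould: its value depends only on the depth. -/
def IsConstantMould (C : List K → K) : Prop :=
  ∀ w w' : List K, w.length = w'.length → C w = C w'


/-- membership in ARI_{al/al} (underlined): alternal, alternal swap, even in depth 1. -/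
def InALAL (A : List K → K) : Prop :=
  A [] = 0 ∧ Alternal A ∧ Alternal (swapUV A) ∧ (∀ x : K, A [-x] = A [x])

/-- membership in ARI_{al*al} (underlined): alternal, swap alternal up to a
constant-valued mould, even in depth 1. -/
def InALstarAL (A : List K → K) : Prop :=
  A [] = 0 ∧ Alternal A ∧
    (∃ C : List K → K, IsConstantMould C ∧ Alternal (fun w => swapUV A w + C w)) ∧
    (∀ x : K, A [-x] = A [x])


set_option linter.unusedSectionVars false
set_option linter.unusedSimpArgs false

/-! ### List sums -/

/-- sum of a function over a list -/
def LS {β : Type*} (L : List β) (F : β → K) : K := (L.map F).sum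

section basics
variable {β γ : Type*}

theorem LS_nil (F : β → K) : LS [] F = 0 := by simp [LS]
theorem LS_cons (x : β) (L : List β) (F : β → K) : LS (x :: L) F = F x + LS L F := by simp [LS]
theorem LS_append (L M : List β) (F : β → K) : LS (L ++ M) F = LS L F + LS M F := by simp [LS]
theorem LS_map (L : List γ) (g : γ → β) (F : β → K) : LS (L.map g) F = LS L (fun x => F (g x)) := by
  simp [LS, Function.comp_def]
theorem LS_congr {L : List β} {F G : β → K} (h : ∀ x ∈ L, F x = G x) : LS L F = LS L G := by
  simp only [LS]; rw [List.map_congr_left h]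
theorem LS_zero (L : List β) : LS L (fun _ => (0 : K)) = 0 := by simp [LS]
theorem LS_add (L : List β) (F G : β → K) : LS L (fun x => F x + G x) = LS L F + LS L G := by
  induction L with
  | nil => simp [LS_nil]
  | cons x L ih => simp only [LS_cons, ih]; ring
theorem LS_sub (L : List β) (F G : β → K) : LS L (fun x => F x - G x) = LS L F - LS L G := by
  induction L with
  | nil => simp [LS_nil]
  | cons x L ih => simp only [LS_cons, ih]; ring
theorem LS_neg (L : List β) (F : β → K) : LS L (fun x => - F x) = - LS L F := by
  induction L with
  | nil => simp [LS_nil]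
  | cons x L ih => simp only [LS_cons, ih]; ring
theorem LS_mul_left (L : List β) (c : K) (F : β → K) : LS L (fun x => c * F x) = c * LS L F := by
  induction L with
  | nil => simp [LS_nil]
  | cons x L ih => simp only [LS_cons, ih]; ring
theorem LS_mul_right (L : List β) (c : K) (F : β → K) : LS L (fun x => F x * c) = LS L F * c := by
  induction L with
  | nil => simp [LS_nil]
  | cons x L ih => simp only [LS_cons, ih]; ring
theorem LS_comm (L : List β) (M : List γ) (F : β → γ → K) :
    LS L (fun x => LS M (fun y => F x y)) = LS M (fun y => LS L (fun x => F x y)) := by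
  induction L with
  | nil => simp [LS_nil, LS_zero]
  | cons x L ih => simp only [LS_cons, ih, LS_add]
theorem LS_flatMap (L : List γ) (g : γ → List β) (F : β → K) :
    LS (L.flatMap g) F = LS L (fun x => LS (g x) F) := by
  induction L with
  | nil => simp [LS_nil]
  | cons x L ih => simp only [LS_cons, ← ih, List.flatMap_cons, LS_append]
end basics

/-- sum over two-splittings -/
def S2 (w : List K) (F : List K → List K → K) : K := LS (splits2 w) (fun p => F p.1 p.2)
/-- sum over shuffles -/
def Sh (u v : List K) (F : List K → K) : K := LS (shuffles u v) F

theorem splits2_nil {α : Type*} : splits2 ([] : List α) = [([], [])] := by simp [splits2]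
theorem splits2_cons {α : Type*} (x : α) (w : List α) :
    splits2 (x :: w) = ([], x :: w) :: (splits2 w).map (fun p => (x :: p.1, p.2)) := by
  simp only [splits2, List.length_cons]
  rw [List.range_succ_eq_map]
  simp [Function.comp_def]

theorem S2_nil (F : List K → List K → K) : S2 [] F = F [] [] := by
  simp [S2, splits2_nil, LS_cons, LS_nil]
theorem S2_cons (x : K) (w : List K) (F : List K → List K → K) :
    S2 (x :: w) F = F [] (x :: w) + S2 w (fun a b => F (x :: a) b) := by
  simp [S2, splits2_cons, LS_cons, LS_map]
theorem S2_add (w : List K) (F G : List K → List K → K) :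
    S2 w (fun a b => F a b + G a b) = S2 w F + S2 w G := LS_add _ _ _
theorem S2_sub (w : List K) (F G : List K → List K → K) :
    S2 w (fun a b => F a b - G a b) = S2 w F - S2 w G := LS_sub _ _ _
theorem S2_zero (w : List K) : S2 w (fun _ _ => (0 : K)) = 0 := LS_zero _
theorem S2_comm (w w' : List K) (F : List K → List K → List K → List K → K) :
    S2 w (fun a b => S2 w' (fun c d => F a b c d)) = S2 w' (fun c d => S2 w (fun a b => F a b c d)) :=
  LS_comm _ _ _
theorem S2_Sh_comm (w u v : List K) (F : List K → List K → List K → K) :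
    S2 w (fun a b => Sh u v (fun c => F a b c)) = Sh u v (fun c => S2 w (fun a b => F a b c)) :=
  LS_comm _ _ _
theorem Sh_comm (p q u v : List K) (F : List K → List K → K) :
    Sh p q (fun a => Sh u v (fun c => F a c)) = Sh u v (fun c => Sh p q (fun a => F a c)) :=
  LS_comm _ _ _
theorem Sh_add (u v : List K) (F G : List K → K) :
    Sh u v (fun a => F a + G a) = Sh u v F + Sh u v G := LS_add _ _ _
theorem Sh_sub (u v : List K) (F G : List K → K) :
    Sh u v (fun a => F a - G a) = Sh u v F - Sh u v G := LS_sub _ _ _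
theorem Sh_neg (u v : List K) (F : List K → K) :
    Sh u v (fun a => - F a) = - Sh u v F := LS_neg _ _
theorem Sh_zero (u v : List K) : Sh u v (fun _ => (0 : K)) = 0 := LS_zero _
theorem Sh_nil_left (v : List K) (F : List K → K) : Sh [] v F = F v := by
  simp [Sh, shuffles, LS_cons, LS_nil]
theorem Sh_nil_right (u : List K) (F : List K → K) : Sh u [] F = F u := by
  cases u <;> simp [Sh, shuffles, LS_cons, LS_nil]
theorem Sh_cons (x y : K) (u v : List K) (F : List K → K) :
    Sh (x :: u) (y :: v) F =
      Sh u (y :: v) (fun w => F (x :: w)) + Sh (x :: u) v (fun w => F (y :: w)) := by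
  simp [Sh, shuffles, LS_append, LS_map]

theorem shuffles_perm {α : Type*} (u v : List α) : ∀ w ∈ shuffles u v, w.Perm (u ++ v) := by
  induction u generalizing v with
  | nil => simp [shuffles]
  | cons x u ihu =>
    induction v with
    | nil => simp [shuffles]
    | cons y v ihv =>
      intro w hw
      simp only [shuffles, List.mem_append, List.mem_map] at hw
      rcases hw with ⟨t, ht, rfl⟩ | ⟨t, ht, rfl⟩
      · exact (ihu _ t ht).cons x
      · exact ((ihv t ht).cons y).trans (List.perm_middle (l₁ := x :: u)).symm

theorem Sh_congr {u v : List K} {F G : List K → K} (h : ∀ w, w.Perm (u ++ v) → F w = G w) :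
    Sh u v F = Sh u v G := LS_congr fun w hw => h w (shuffles_perm u v w hw)

theorem Sh_symm (u v : List K) (F : List K → K) : Sh u v F = Sh v u F := by
  induction u generalizing v F with
  | nil => simp [Sh_nil_left, Sh_nil_right]
  | cons x u ihu =>
    induction v generalizing F with
    | nil => simp [Sh_nil_left, Sh_nil_right]
    | cons y v ihv =>
      rw [Sh_cons, Sh_cons, ihu, ihv]; ring

/-- shuffle is compatible with deconcatenation -/
theorem Sh_S2 (u v : List K) (F : List K → List K → K) :
    Sh u v (fun w => S2 w F) = S2 u (fun u1 u2 => S2 v (fun v1 v2 =>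
      Sh u1 v1 (fun a => Sh u2 v2 (fun b => F a b)))) := by
  induction u generalizing v F with
  | nil => simp only [S2_nil, Sh_nil_left]
  | cons x u ihu =>
    induction v generalizing F with
    | nil => simp only [S2_nil, Sh_nil_right]
    | cons y v ihv =>
      rw [Sh_cons]
      simp only [S2_cons x, S2_cons y, Sh_nil_left, Sh_nil_right, Sh_add, Sh_cons, S2_add] at ihu ihv ⊢
      rw [ihu, ihv]
      simp only [S2_cons x, S2_cons y, Sh_nil_left, Sh_nil_right, Sh_add, Sh_cons, S2_add]
      ring

/-- shuffles around a marked letter -/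
theorem Sh_marked (p q v : List K) (z : K) (F : List K → K) :
    Sh (p ++ z :: q) v F = S2 v (fun v1 v2 => Sh p v1 (fun a => Sh q v2 (fun c => F (a ++ z :: c)))) := by
  induction p generalizing v F with
  | nil =>
    induction v generalizing F with
    | nil => simp [S2_nil, Sh_nil_right]
    | cons y v ih =>
      simp only [Sh_nil_left, List.nil_append] at ih ⊢
      rw [Sh_cons, S2_cons, ih]; simp
  | cons x p ihp =>
    induction v generalizing F with
    | nil => simp [S2_nil, Sh_nil_right]
    | cons y v ih =>
      simp only [List.cons_append] at ih ⊢
      rw [Sh_cons, S2_cons, ih, ihp]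
      simp only [S2_cons, Sh_cons, Sh_nil_right, S2_add, List.cons_append]
      ring

theorem Sh_single_concat (x y : K) (v : List K) (F : List K → K) :
    Sh [x] (v ++ [y]) F = F (v ++ [y, x]) + Sh [x] v (fun w => F (w ++ [y])) := by
  induction v generalizing F with
  | nil => simp [Sh_cons, Sh_nil_left, Sh_nil_right]; ring
  | cons z v ih =>
    simp only [List.cons_append, Sh_cons, Sh_nil_left]
    rw [ih]; ring

theorem Sh_concat (x y : K) (u v : List K) (F : List K → K) :
    Sh (u ++ [x]) (v ++ [y]) F =
      Sh u (v ++ [y]) (fun w => F (w ++ [x])) + Sh (u ++ [x]) v (fun w => F (w ++ [y])) := by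
  induction u generalizing v F with
  | nil => simp [Sh_single_concat, Sh_nil_left]
  | cons z u ihu =>
    induction v generalizing F with
    | nil =>
      have := Sh_single_concat y x (z :: u) F
      rw [Sh_symm] at this
      simp only [List.nil_append]
      rw [this, Sh_symm [y], Sh_nil_right]
      simp; ring
    | cons t v ihv =>
      simp only [List.cons_append] at ihv ⊢
      rw [Sh_cons, Sh_cons, Sh_cons]
      have := ihu (t :: v)
      simp only [List.cons_append] at this
      rw [ihv, this]; simp only [List.cons_append]; ring

theorem alt_iff (A : List K → K) :
    Alternal A ↔ ∀ u v : List K, u ≠ [] → v ≠ [] → Sh u v A = 0 := Iff.rfl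

theorem alt_delta {A : List K → K} (hA : Alternal A) (h0 : A [] = 0) (u v : List K) :
    Sh u v A = (if u = [] then A v else 0) + (if v = [] then A u else 0) := by
  by_cases hu : u = []
  · subst hu; by_cases hv : v = []
    · subst hv; simp [Sh_nil_left, h0]
    · simp [Sh_nil_left, hv]
  · by_cases hv : v = []
    · subst hv; simp [Sh_nil_right, hu]
    · simp [hu, hv, (alt_iff A).1 hA u v hu hv]

theorem S2_left_nil (w : List K) (F : List K → List K → K) :
    S2 w (fun a b => if a = [] then F a b else 0) = F [] w := by
  cases w <;> simp [S2_nil, S2_cons, S2_zero]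

theorem S2_right_nil (w : List K) (F : List K → List K → K) :
    S2 w (fun a b => if b = [] then F a b else 0) = F w [] := by
  induction w generalizing F with
  | nil => simp [S2_nil]
  | cons x w ih => simp [S2_cons, ih (fun a b => F (x :: a) b)]

theorem S2_concat (x : K) (w : List K) (F : List K → List K → K) :
    S2 (w ++ [x]) F = S2 w (fun a b => F a (b ++ [x])) + F (w ++ [x]) [] := by
  induction w generalizing F with
  | nil => simp [S2_nil, S2_cons]
  | cons y w ih => simp only [List.cons_append, S2_cons, ih]; ring

theorem S2_reverse (w : List K) (F : List K → List K → K) :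
    S2 w F = S2 w.reverse (fun a b => F b.reverse a.reverse) := by
  induction w generalizing F with
  | nil => simp [S2_nil]
  | cons x w ih =>
    rw [S2_cons, ih, List.reverse_cons, S2_concat]; simp; ring

theorem S2_assoc (w : List K) (F : List K → List K → List K → K) :
    S2 w (fun a r => S2 r (fun b c => F a b c)) = S2 w (fun r c => S2 r (fun a b => F a b c)) := by
  induction w generalizing F with
  | nil => simp [S2_nil]
  | cons x w ih => 
    simp only [S2_cons, S2_nil, S2_add, ih (fun a b c => F (x :: a) b c)]; ring

theorem S2_S2_reverse (w : List K) (F : List K → List K → List K → K) :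
    S2 w (fun a r => S2 r (fun b c => F a b c)) =
      S2 w.reverse (fun c r => S2 r (fun b a => F a.reverse b.reverse c.reverse)) := by
  rw [S2_assoc, S2_reverse]
  congr 1; funext a b
  rw [S2_reverse]; simp

/-- head matching -/
def hd (G : K → List K → K) : List K → K
  | [] => 0
  | x :: t => G x t

theorem hd_nil (G : K → List K → K) : hd G [] = 0 := rfl
theorem hd_cons (G : K → List K → K) (x : K) (t : List K) : hd G (x :: t) = G x t := rfl

/-- last matching -/
def ls (G : K → List K → K) (m : List K) : K := hd (fun z b => G z b.reverse) m.reverse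

theorem ls_nil (G : K → List K → K) : ls G [] = 0 := by simp [ls, hd]
theorem ls_concat (G : K → List K → K) (z : K) (b : List K) : ls G (b ++ [z]) = G z b := by
  simp [ls, hd]
theorem ls_single (G : K → List K → K) (z : K) : ls G [z] = G z [] := ls_concat G z []
theorem ls_cons (G : K → List K → K) (x : K) (a : List K) :
    ls G (x :: a) = (if a = [] then G x [] else 0) + ls (fun z t => G z (x :: t)) a := by
  rcases List.eq_nil_or_concat a with rfl | ⟨b, z, rfl⟩
  · simp [ls_nil, ls_single]
  · rw [List.concat_eq_append, ← List.cons_append, ls_concat, ls_concat]; simp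

theorem hd_ls (w : List K) (G : List K → K → List K → K) :
    S2 w (fun a b => hd (fun z t => G a z t) b) = S2 w (fun a b => ls (fun z t => G t z b) a) := by
  induction w generalizing G with
  | nil => simp [S2_nil, hd, ls_nil]
  | cons x w ih =>
    simp only [S2_cons, hd_cons, ls_nil, ls_cons, S2_add]
    rw [ih (fun a z t => G (x :: a) z t), S2_left_nil w (fun a b => G [] x b)]; ring

/-! ### Alternality of brackets -/

theorem mu_eq (A B : List K → K) (w : List K) : mu A B w = S2 w (fun a b => A a * B b) := by
  simp only [mu, S2, LS, splits2, List.map_map, Function.comp_def]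
  generalize w.length + 1 = n
  induction n with
  | zero => simp
  | succ n ih => rw [Finset.sum_range_succ, ih, List.range_succ]; simp

theorem Sh_mu {A B : List K → K} (hA : Alternal A) (hB : Alternal B) (hA0 : A [] = 0) (hB0 : B [] = 0)
    (u v : List K) (hu : u ≠ []) (hv : v ≠ []) : Sh u v (mu A B) = A u * B v + A v * B u := by
  have h1 : mu A B = fun w => S2 w (fun a b => A a * B b) := by funext w; exact mu_eq A B w
  rw [h1, Sh_S2]
  have h2 : ∀ u1 v1 u2 v2 : List K, Sh u1 v1 (fun a => Sh u2 v2 (fun b => A a * B b))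
      = Sh u1 v1 A * Sh u2 v2 B := by
    intro u1 v1 u2 v2
    simp only [Sh, LS_mul_left, LS_mul_right]
  simp only [h2, alt_delta hA hA0, alt_delta hB hB0]
  have h3 : ∀ u1 u2 : List K, S2 v (fun v1 v2 => ((if u1 = [] then A v1 else 0) + (if v1 = [] then A u1 else 0)) *
      ((if u2 = [] then B v2 else 0) + (if v2 = [] then B u2 else 0))) =
      (if u1 = [] then (if u2 = [] then mu A B v else 0) else 0) + (if u1 = [] then A v * B u2 else 0)
       + (if u2 = [] then A u1 * B v else 0) := by
    intro u1 u2
    have e : ∀ v1 v2 : List K, ((if u1 = [] then A v1 else 0) + (if v1 = [] then A u1 else 0)) *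
      ((if u2 = [] then B v2 else 0) + (if v2 = [] then B u2 else 0)) =
      (if u1 = [] then (if u2 = [] then A v1 * B v2 else 0) else 0)
      + (if v2 = [] then (if u1 = [] then A v1 * B u2 else 0) else 0)
      + (if v1 = [] then (if u2 = [] then A u1 * B v2 else 0) else 0)
      + (if v1 = [] then (if v2 = [] then A u1 * B u2 else 0) else 0) := by
      intro v1 v2; split_ifs <;> ring
    simp only [e, S2_add, S2_right_nil v (fun v1 v2 => if u1 = [] then A v1 * B u2 else 0),
      S2_left_nil v (fun v1 v2 => if u2 = [] then A u1 * B v2 else 0),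
      S2_left_nil v (fun v1 v2 => if v2 = [] then A u1 * B u2 else 0), if_neg hv, add_zero]
    congr 2
    split_ifs
    · rw [mu_eq]
    · exact S2_zero _
    · exact S2_zero _
  simp only [h3, S2_add, S2_left_nil u (fun u1 u2 => if u2 = [] then mu A B v else 0),
    S2_left_nil u (fun u1 u2 => A v * B u2), S2_right_nil u (fun u1 u2 => A u1 * B v), if_neg hu]
  ring

theorem alt_lu {A B : List K → K} (hA : Alternal A) (hB : Alternal B) (hA0 : A [] = 0) (hB0 : B [] = 0) :
    Alternal (lu A B) := by
  rw [alt_iff]; intro u v hu hv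
  have : Sh u v (lu A B) = Sh u v (mu A B) - Sh u v (mu B A) := Sh_sub _ _ _ _
  rw [this, Sh_mu hA hB hA0 hB0 u v hu hv, Sh_mu hB hA hB0 hA0 u v hu hv]; ring

theorem alt_block (k : List K → List K → List K → K)
    (h1 : ∀ a c, Alternal (fun m => k a m c)) (h0 : ∀ a c, k a [] c = 0)
    (h2 : ∀ p q m v, v ≠ [] → S2 v (fun v1 v2 => Sh p v1 (fun a => Sh q v2 (fun c => k a m c))) = 0) :
    Alternal (fun w => S2 w (fun a r => S2 r (fun m c => k a m c))) := by
  rw [alt_iff]; intro u v hu hv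
  rw [Sh_S2]
  have e : ∀ a ur vr, Sh ur vr (fun r => S2 r (fun m c => k a m c)) =
      S2 vr (fun v2 v3 => Sh ur v3 (fun c => k a v2 c)) + S2 ur (fun u2 u3 => Sh u3 vr (fun c => k a u2 c)) := by
    intro a ur vr
    rw [Sh_S2]
    have e1 : ∀ u2 v2 u3 v3 : List K, Sh u2 v2 (fun m => Sh u3 v3 (fun c => k a m c)) =
        (if u2 = [] then Sh u3 v3 (fun c => k a v2 c) else 0) +
        (if v2 = [] then Sh u3 v3 (fun c => k a u2 c) else 0) := by
      intro u2 v2 u3 v3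
      rw [Sh_comm]
      have : ∀ c, Sh u2 v2 (fun m => k a m c) = _ := fun c => alt_delta (h1 a c) (h0 a c) u2 v2
      simp only [this, Sh_add]
      congr 1 <;> split_ifs <;> first | rfl | exact Sh_zero _ _
    simp only [e1, S2_add, S2_left_nil vr (fun v2 v3 => Sh _ v3 (fun c => k a _ c))]
    congr 1
    rw [S2_comm]
    congr 1; funext v2 v3
    exact S2_left_nil ur (fun u2 u3 => Sh u3 v3 (fun c => k a v2 c))
  simp only [e, Sh_add, S2_add, ← S2_Sh_comm]
  have z1 : S2 u (fun u1 u2 => S2 v fun v1 v2 => S2 v2 fun c d => Sh u1 v1 fun a => Sh u2 d fun e => k a c e) = 0 := by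
    rw [S2_comm]
    simp only [S2_comm u]
    have : ∀ v1 c d, S2 u (fun u1 u2 => Sh u1 v1 fun a => Sh u2 d fun e => k a c e) = 0 := by
      intro v1 c d
      rw [← h2 v1 d c u hu]
      congr 1; funext u1 u2
      rw [Sh_symm]; congr 1; funext a; rw [Sh_symm]
    simp only [this, S2_zero]
  have z2 : S2 u (fun u1 u2 => S2 v fun v1 v2 => S2 u2 fun c d => Sh u1 v1 fun a => Sh d v2 fun e => k a c e) = 0 := by
    simp only [S2_comm v]
    simp only [h2 _ _ _ v hv, S2_zero]
  rw [z1, z2, add_zero]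

theorem Sh_hd {H : K → List K → K} (h : ∀ z, Alternal (H z)) (h0 : ∀ z, H z [] = 0) (u v : List K)
    (hu : u ≠ []) (hv : v ≠ []) :
    Sh u v (hd H) = hd (fun z b => if b = [] then H z v else 0) u + hd (fun z b => if b = [] then H z u else 0) v := by
  obtain ⟨x, u, rfl⟩ := List.exists_cons_of_ne_nil hu
  obtain ⟨y, v, rfl⟩ := List.exists_cons_of_ne_nil hv
  rw [Sh_cons]
  simp only [hd_cons]
  have e1 : Sh u (y :: v) (fun w => H x w) = _ := alt_delta (h x) (h0 x) _ _
  have e2 : Sh (x :: u) v (fun w => H y w) = _ := alt_delta (h y) (h0 y) _ _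
  rw [e1, e2]; simp

theorem Sh_ls {H : K → List K → K} (h : ∀ z, Alternal (H z)) (h0 : ∀ z, H z [] = 0) (u v : List K)
    (hu : u ≠ []) (hv : v ≠ []) :
    Sh u v (ls H) = ls (fun z b => if b = [] then H z v else 0) u + ls (fun z b => if b = [] then H z u else 0) v := by
  rcases List.eq_nil_or_concat u with rfl | ⟨u, x, rfl⟩
  · exact absurd rfl hu
  rcases List.eq_nil_or_concat v with rfl | ⟨v, y, rfl⟩
  · exact absurd rfl hv
  simp only [List.concat_eq_append]
  rw [Sh_concat]
  simp only [ls_concat]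
  have e1 : Sh u (v ++ [y]) (fun w => H x w) = _ := alt_delta (h x) (h0 x) _ _
  have e2 : Sh (u ++ [x]) v (fun w => H y w) = _ := alt_delta (h y) (h0 y) _ _
  rw [e1, e2]; simp

theorem hd_eq_ls (c : K → K) (u : List K) :
    hd (fun z b => if b = [] then c z else 0) u = ls (fun z b => if b = [] then c z else 0) u := by
  rcases u with _ | ⟨x, _ | ⟨y, u⟩⟩
  · simp [hd_nil, ls_nil]
  · simp [hd_cons, ls_single]
  · rw [hd_cons, ls_cons]
    simp only [reduceCtorEq, if_false, zero_add]
    rcases List.eq_nil_or_concat (y :: u) with h | ⟨b, z, h⟩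
    · simp at h
    · rw [h, List.concat_eq_append, ls_concat]

/-- general block sum defining `arit` -/
def blk (f : K → List K → K) (g : K → List K → List K) (B A : List K → K) (a m c : List K) : K :=
  ls (fun z b => A (a ++ f z b :: c) * B (g z b)) m - hd (fun z b => A (a ++ f z b :: c) * B (g z b)) m

theorem alt_blk (f : K → List K → K) (g : K → List K → List K) (B A : List K → K)
    (hA : Alternal A) (hf : ∀ z b b', b.Perm b' → f z b = f z b')
    (hB : ∀ z, Alternal (fun b => B (g z b))) (hB0 : ∀ z, B (g z []) = 0) :
    Alternal (fun w => S2 w (fun a r => S2 r (fun m c => blk f g B A a m c))) := by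
  apply alt_block
  · intro a c
    have h : ∀ z, Alternal (fun b => A (a ++ f z b :: c) * B (g z b)) := by
      intro z
      rw [alt_iff]; intro u v hu hv
      have : Sh u v (fun b => A (a ++ f z b :: c) * B (g z b)) =
          Sh u v (fun b => A (a ++ f z (u ++ v) :: c) * B (g z b)) :=
        Sh_congr fun w hw => by rw [hf z w _ hw]
      rw [this]
      have h2 := (alt_iff _).1 (hB z) u v hu hv
      simp only [Sh, LS_mul_left] at h2 ⊢
      rw [h2, mul_zero]
    rw [alt_iff]; intro u v hu hv
    have h0 : ∀ z, A (a ++ f z [] :: c) * B (g z []) = 0 := fun z => by rw [hB0, mul_zero]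
    have e1 := Sh_hd h h0 u v hu hv
    have e2 := Sh_ls h h0 u v hu hv
    simp only [blk, Sh_sub]
    have e1' : Sh u v (fun a_1 => hd (fun z b => A (a ++ f z b :: c) * B (g z b)) a_1) = _ := e1
    have e2' : Sh u v (fun a_1 => ls (fun z b => A (a ++ f z b :: c) * B (g z b)) a_1) = _ := e2
    rw [e1', e2', hd_eq_ls (fun z => A (a ++ f z v :: c) * B (g z v)), hd_eq_ls (fun z => A (a ++ f z u :: c) * B (g z u)), sub_self]
  · intro a c; simp [blk, hd_nil, ls_nil]
  · intro p q m v hv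
    have key : ∀ z b, S2 v (fun v1 v2 => Sh p v1 (fun a => Sh q v2 (fun c => A (a ++ f z b :: c) * B (g z b)))) = 0 := by
      intro z b
      have := Sh_marked p q v (f z b) (fun w => A w * B (g z b))
      rw [← this]
      have h2 := (alt_iff _).1 hA (p ++ f z b :: q) v (by simp) hv
      simp only [Sh, LS_mul_right] at h2 ⊢
      rw [h2, zero_mul]
    simp only [blk, Sh_sub, S2_sub]
    rcases List.eq_nil_or_concat m with rfl | ⟨b, z, hm⟩
    · simp [hd_nil, ls_nil, Sh_zero, S2_zero]
    · rw [List.concat_eq_append] at hm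
      have e1 : ∀ G, ls G m = G z b := fun G => by rw [hm, ls_concat]
      obtain ⟨x, t, hx⟩ : ∃ x t, m = x :: t := by
        cases m with
        | nil => simp at hm
        | cons x t => exact ⟨x, t, rfl⟩
      have e2 : ∀ G, hd G m = G x t := fun G => by rw [hx, hd_cons]
      simp only [e1, e2, key, sub_self]

theorem splits3_sum (w : List K) (F : List K × List K × List K → K) :
    ((splits3 w).map F).sum = S2 w (fun a r => S2 r (fun b c => F (a, b, c))) := by
  have : ((splits3 w).map F).sum = LS (splits3 w) F := rfl
  rw [this, splits3, LS_flatMap]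
  simp only [LS_map]; rfl

theorem addLast_concat (s z : K) (a : List K) : addLast s (a ++ [z]) = a ++ [z + s] := by
  induction a with
  | nil => rfl
  | cons x a ih =>
    cases a with
    | nil => rfl
    | cons y a => simp only [List.cons_append, addLast] at ih ⊢; rw [ih]

theorem amitU_eq (B A : List K → K) (hB : B [] = 0) (w : List K) :
    amitU B A w = S2 w (fun a r => S2 r (fun b c => if c = [] then 0 else A (a ++ addFirst b.sum c) * B b)) := by
  rw [amitU, splits3_sum]
  congr 1; funext a r; congr 1; funext b c
  rcases b with _ | ⟨y, b⟩ <;> rcases c with _ | ⟨z, c⟩ <;> simp [hB]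

theorem amitV_eq (B A : List K → K) (hB : B [] = 0) (w : List K) :
    amitV B A w = S2 w (fun a r => S2 r (fun b c => hd (fun c0 c' => A (a ++ c0 :: c') * B (b.map (fun x => x - c0))) c)) := by
  rw [amitV, splits3_sum]
  congr 1; funext a r; congr 1; funext b c
  rcases b with _ | ⟨y, b⟩ <;> rcases c with _ | ⟨z, c⟩ <;> simp [hB, hd_nil, hd_cons]

theorem anitU_eq (B A : List K → K) (hB : B [] = 0) (w : List K) :
    anitU B A w = S2 w (fun a r => S2 r (fun b c => ls (fun z a' => A (a' ++ (z + b.sum) :: c) * B b) a)) := by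
  rw [anitU, splits3_sum]
  congr 1; funext a r; congr 1; funext b c
  rcases List.eq_nil_or_concat a with rfl | ⟨a', z, h⟩
  · simp [ls_nil]
  · have e : ls (fun z a' => A (a' ++ (z + b.sum) :: c) * B b) a = A (addLast b.sum a ++ c) * B b := by
      rw [h, List.concat_eq_append, ls_concat, addLast_concat]; simp
    rw [e]
    have ha : a ≠ [] := by rw [h]; simp
    clear h e
    rcases b with _ | ⟨y, b⟩ <;> rcases a with _ | ⟨x, a⟩ <;> first | exact absurd rfl ha | simp [hB]

theorem anitV_eq (B A : List K → K) (hB : B [] = 0) (w : List K) :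
    anitV B A w = S2 w (fun a r => S2 r (fun b c => ls (fun z a' => A (a' ++ z :: c) * B (b.map (fun x => x - z))) a)) := by
  rw [anitV, splits3_sum]
  congr 1; funext a r; congr 1; funext b c
  rcases List.eq_nil_or_concat a with rfl | ⟨a', z, h⟩
  · simp [ls_nil]
  · have e : ls (fun z a' => A (a' ++ z :: c) * B (b.map (fun x => x - z))) a = A (a ++ c) * B (b.map (fun x => x - a.getLastD 0)) := by
      rw [h, List.concat_eq_append, ls_concat]; simp
    rw [e]
    have ha : a ≠ [] := by rw [h]; simp
    clear h e
    rcases b with _ | ⟨y, b⟩ <;> rcases a with _ | ⟨x, a⟩ <;> first | exact absurd rfl ha | simp [hB]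

theorem amit_blk (H : List K → K → List K → List K → K) (w : List K) :
    S2 w (fun a r => S2 r (fun b c => hd (fun z c' => H a z b c') c)) =
    S2 w (fun a r => S2 r (fun m c => ls (fun z b => H a z b c) m)) := by
  congr 1; funext a r
  exact hd_ls r (fun b z c => H a z b c)

theorem anit_blk (H : List K → K → List K → List K → K) (w : List K) :
    S2 w (fun a r => S2 r (fun b c => ls (fun z a' => H a' z b c) a)) =
    S2 w (fun a r => S2 r (fun m c => hd (fun z b => H a z b c) m)) := by
  rw [S2_assoc, S2_assoc]
  congr 1; funext r c
  exact (hd_ls r (fun a z b => H a z b c)).symm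

theorem aritU_eq (B A : List K → K) (hB : B [] = 0) (w : List K) :
    aritU B A w = S2 w (fun a r => S2 r (fun m c => blk (fun z b => z + b.sum) (fun _ b => b) B A a m c)) := by
  simp only [blk, S2_sub]
  rw [← anit_blk (fun a z b c => A (a ++ (z + b.sum) :: c) * B b),
    ← amit_blk (fun a z b c => A (a ++ (z + b.sum) :: c) * B b)]
  rw [aritU, anitU_eq B A hB, amitU_eq B A hB]
  congr 2; funext a r; congr 1; funext b c
  cases c <;> simp [hd_nil, hd_cons, addFirst]

theorem aritV_eq (B A : List K → K) (hB : B [] = 0) (w : List K) :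
    aritV B A w = S2 w (fun a r => S2 r (fun m c => blk (fun z _ => z) (fun z b => b.map (fun x => x - z)) B A a m c)) := by
  simp only [blk, S2_sub]
  rw [← anit_blk (fun a z b c => A (a ++ z :: c) * B (b.map (fun x => x - z))),
    ← amit_blk (fun a z b c => A (a ++ z :: c) * B (b.map (fun x => x - z)))]
  rw [aritV, anitV_eq B A hB, amitV_eq B A hB]

theorem Sh_map (f : K → K) (u v : List K) (F : List K → K) :
    Sh u v (fun w => F (w.map f)) = Sh (u.map f) (v.map f) F := by
  induction u generalizing v F with
  | nil => simp [Sh_nil_left]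
  | cons x u ihu =>
    induction v generalizing F with
    | nil => simp [Sh_nil_right]
    | cons y v ihv =>
      have h1 := ihu (y :: v) (fun w => F (f x :: w))
      have h2 := ihv (fun w => F (f y :: w))
      simp only [List.map_cons] at h1 h2 ⊢
      rw [Sh_cons, Sh_cons, ← h1, ← h2]; simp only [List.map_cons]

theorem alt_map {A : List K → K} (hA : Alternal A) (f : K → K) : Alternal (fun w => A (w.map f)) := by
  rw [alt_iff] at hA ⊢; intro u v hu hv
  rw [Sh_map]; exact hA _ _ (by simpa using hu) (by simpa using hv)

theorem alt_add {A B : List K → K} (hA : Alternal A) (hB : Alternal B) : Alternal (fun w => A w + B w) := by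
  rw [alt_iff] at *; intro u v hu hv; rw [Sh_add, hA u v hu hv, hB u v hu hv, add_zero]
theorem alt_sub {A B : List K → K} (hA : Alternal A) (hB : Alternal B) : Alternal (fun w => A w - B w) := by
  rw [alt_iff] at *; intro u v hu hv; rw [Sh_sub, hA u v hu hv, hB u v hu hv, sub_zero]

theorem alt_aritU {A B : List K → K} (hA : Alternal A) (hB : Alternal B) (hB0 : B [] = 0) :
    Alternal (aritU B A) := by
  have : aritU B A = _ := funext fun w => aritU_eq B A hB0 w
  rw [this]
  apply alt_blk _ _ _ _ hA
  · intro z b b' h; rw [h.sum_eq]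
  · intro z; exact hB
  · intro z; exact hB0

theorem alt_aritV {A B : List K → K} (hA : Alternal A) (hB : Alternal B) (hB0 : B [] = 0) :
    Alternal (aritV B A) := by
  have : aritV B A = _ := funext fun w => aritV_eq B A hB0 w
  rw [this]
  apply alt_blk _ _ _ _ hA
  · intro z b b' h; rfl
  · intro z; exact alt_map hB _
  · intro z; exact hB0

theorem alt_ariU {A B : List K → K} (hA : Alternal A) (hB : Alternal B) (hA0 : A [] = 0) (hB0 : B [] = 0) :
    Alternal (ariU A B) :=
  alt_sub (alt_add (alt_aritU hA hB hB0) (alt_lu hA hB hA0 hB0)) (alt_aritU hB hA hA0)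

theorem alt_ariV {A B : List K → K} (hA : Alternal A) (hB : Alternal B) (hA0 : A [] = 0) (hB0 : B [] = 0) :
    Alternal (ariV A B) :=
  alt_sub (alt_add (alt_aritV hA hB hB0) (alt_lu hA hB hA0 hB0)) (alt_aritV hB hA hA0)

/-! ### Swap -/

/-- successive differences starting from `p` -/
def D (p : K) : List K → List K
  | [] => []
  | z :: zs => (z - p) :: D z zs

theorem D_nil (p : K) : D p [] = [] := rfl
theorem D_cons (p z : K) (zs : List K) : D p (z :: zs) = (z - p) :: D z zs := rfl

theorem swapUargs_eq (w : List K) : swapUargs w = D 0 w.reverse := by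
  rw [swapUargs]
  generalize w.reverse = l
  generalize (0 : K) = p
  induction l generalizing p with
  | nil => rfl
  | cons x l ih => rw [List.zipWith_cons_cons, ih, D_cons]

/-- last letter with default -/
def lst (p : K) : List K → K
  | [] => p
  | z :: zs => lst z zs

theorem lst_append (p : K) (a b : List K) : lst p (a ++ b) = lst (lst p a) b := by
  induction a generalizing p with
  | nil => rfl
  | cons x a ih => simp only [List.cons_append, lst, ih]

theorem lst_concat (p z : K) (a : List K) : lst p (a ++ [z]) = z := by
  rw [lst_append]; rfl

theorem D_append (p : K) (a b : List K) : D p (a ++ b) = D p a ++ D (lst p a) b := by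
  induction a generalizing p with
  | nil => rfl
  | cons x a ih => simp only [List.cons_append, lst, D_cons, ih]

theorem D_sum (p : K) (a : List K) : (D p a).sum = lst p a - p := by
  induction a generalizing p with
  | nil => simp [D_nil, lst]
  | cons x a ih => simp only [D_cons, List.sum_cons, ih, lst]; ring

theorem D_length (p : K) (a : List K) : (D p a).length = a.length := by
  induction a generalizing p with
  | nil => rfl
  | cons x a ih => simp [D_cons, ih]

theorem D_map (p s : K) (a : List K) : D (p - s) (a.map (fun x => x - s)) = D p a := by
  induction a generalizing p with
  | nil => rfl
  | cons x a ih => simp [D_cons, ih]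

theorem D_map0 (s : K) (a : List K) : D 0 (a.map (fun x => x - s)) = D s a := by
  rw [← D_map s s, sub_self]

theorem S2_D (p : K) (z : List K) (F : List K → List K → K) :
    S2 (D p z) F = S2 z (fun a b => F (D p a) (D (lst p a) b)) := by
  induction z generalizing p F with
  | nil => simp [S2_nil, D_nil]
  | cons x z ih => simp only [D_cons, S2_cons, ih, D_nil, lst]

theorem addFirst_D (p q : K) (a : List K) : addFirst (q - p) (D q a) = D p a := by
  cases a with
  | nil => rfl
  | cons x a => simp [D_cons, addFirst]

/-- push-invariance in cyclic form -/
def PI (A : List K → K) : Prop := ∀ (x y : K) (t : List K), x + y + t.sum = 0 → A (y :: t) = A (t ++ [x])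

theorem PI_D {A : List K → K} (hA : PI A) (β x : K) (t t' : List K) (h : β :: t' = t ++ [x]) :
    A (D β t') = A (D x t) := by
  cases t with
  | nil => simp at h; obtain ⟨rfl, rfl⟩ := h; rfl
  | cons b s =>
    simp only [List.cons_append, List.cons.injEq] at h
    obtain ⟨rfl, rfl⟩ := h
    rw [D_append, D_cons, D_cons, D_nil]
    symm; apply hA
    rw [D_sum]; ring

theorem hd_reverse (G : K → List K → K) (m : List K) : hd G m.reverse = ls (fun z t => G z t.reverse) m := by
  simp [ls]
theorem ls_reverse (G : K → List K → K) (m : List K) : ls G m.reverse = hd (fun z t => G z t.reverse) m := by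
  simp [ls]

theorem if_not' (p : Prop) [Decidable p] (x : K) : (if p then 0 else x) = x - (if p then x else 0) := by
  split_ifs <;> simp

theorem swap_amit (A B : List K → K) (hB0 : B [] = 0) (w : List K) :
    amitV (swapUV B) (swapUV A) w = amitU B A (swapUargs w) - mu (swapUV A) (swapUV B) w + mu A B (swapUargs w) := by
  rw [amitV_eq _ _ (by simpa [swapUV, swapUargs] using hB0), amitU_eq _ _ hB0, mu_eq, mu_eq]
  rw [S2_S2_reverse, S2_reverse w]
  simp only [swapUargs_eq, S2_D, swapUV]
  generalize w.reverse = z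
  have e1 : ∀ c b a : List K, hd (fun c0 c' => A (D 0 (a.reverse ++ c0 :: c').reverse) *
      B (D 0 (b.reverse.map (fun x => x - c0)).reverse)) c.reverse =
      A (D 0 (c ++ a)) * B (D (lst 0 c) b) - (if c = [] then A (D 0 (c ++ a)) * B (D (lst 0 c) b) else 0) := by
    intro c b a
    rcases List.eq_nil_or_concat c with rfl | ⟨c, x, rfl⟩
    · simp [hd_nil]
    · simp [hd_cons, lst_concat, ← List.map_reverse, D_map0]
  have e2 : ∀ c b a : List K, (if D (lst (lst 0 c) b) a = [] then 0 else
      A (D 0 c ++ addFirst (D (lst 0 c) b).sum (D (lst (lst 0 c) b) a)) * B (D (lst 0 c) b)) =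
      A (D 0 (c ++ a)) * B (D (lst 0 c) b) - (if a = [] then A (D 0 (c ++ a)) * B (D (lst 0 c) b) else 0) := by
    intro c b a
    rw [D_sum, addFirst_D, ← D_append]
    cases a <;> simp [D_cons, D_nil]
  simp only [e1, e2, S2_sub]
  have e3 : S2 z (fun c r => S2 r (fun b a => if c = [] then A (D 0 (c ++ a)) * B (D (lst 0 c) b) else 0)) =
      S2 z (fun b a => A (D 0 a) * B (D 0 b)) := by
    have : ∀ c r, S2 r (fun b a => if c = [] then A (D 0 (c ++ a)) * B (D (lst 0 c) b) else 0) =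
      if c = [] then S2 r (fun b a => A (D 0 (c ++ a)) * B (D (lst 0 c) b)) else 0 := by
      intro c r; split_ifs
      · rfl
      · exact S2_zero _
    simp only [this]
    rw [S2_left_nil z (fun c r => S2 r (fun b a => A (D 0 (c ++ a)) * B (D (lst 0 c) b)))]
    simp [lst]
  have e4 : S2 z (fun c r => S2 r (fun b a => if a = [] then A (D 0 (c ++ a)) * B (D (lst 0 c) b) else 0)) =
      S2 z (fun c b => A (D 0 c) * B (D (lst 0 c) b)) := by
    congr 1; funext c r
    rw [S2_right_nil r (fun b a => A (D 0 (c ++ a)) * B (D (lst 0 c) b))]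
    simp
  rw [e3, e4]
  simp only [List.reverse_reverse]
  ring

theorem swap_anit (A B : List K → K) (hB0 : B [] = 0) (hB : PI B) (w : List K) :
    anitV (swapUV B) (swapUV A) w = anitU B A (swapUargs w) := by
  rw [anitV_eq _ _ (by simpa [swapUV, swapUargs] using hB0), anitU_eq _ _ hB0]
  rw [anit_blk (fun a z b c => swapUV A (a ++ z :: c) * swapUV B (b.map (fun x => x - z))),
    anit_blk (fun a z b c => A (a ++ (z + b.sum) :: c) * B b)]
  rw [S2_S2_reverse]
  simp only [swapUargs_eq, S2_D, swapUV]
  generalize w.reverse = z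
  congr 1; funext c r; congr 1; funext M a
  rcases M with _ | ⟨β, t'⟩
  · simp [hd_nil, D_nil]
  · rcases List.eq_nil_or_concat (β :: t') with h | ⟨t, x, h⟩
    · simp at h
    · rw [List.concat_eq_append] at h
      rw [D_cons, hd_cons, hd_reverse]
      have h2 : lst β t' = x := by
        have : lst 0 (β :: t') = x := by rw [h, lst_concat]
        exact this
      have h3 : lst (lst 0 c) (β :: t') = x := by rw [h, lst_concat]
      rw [h3, D_sum, h2, PI_D hB β x t t' h, h, ls_concat]
      simp [← List.map_reverse, D_map0, D_append, D_cons]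

theorem swap_ari (A B : List K → K) (hA0 : A [] = 0) (hB0 : B [] = 0) (hA : PI A) (hB : PI B) (w : List K) :
    ariV (swapUV A) (swapUV B) w = ariU A B (swapUargs w) := by
  simp only [ariV, ariU, aritV, aritU, lu, swap_amit A B hB0, swap_amit B A hA0,
    swap_anit A B hB0 hB, swap_anit B A hA0 hA]
  ring

/-! ### Constants -/

theorem swapUV_nil (A : List K → K) : swapUV A [] = A [] := by simp [swapUV, swapUargs]

theorem arit_const_left (S C : List K → K) (hC : IsConstantMould C) (hC0 : C [] = 0) (hS0 : S [] = 0)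
    (w : List K) : aritV C S w = mu C S w - mu S C w := by
  rw [aritV, amitV_eq _ _ hC0, anitV_eq _ _ hC0, mu_eq, mu_eq]
  have e : ∀ (b : List K) (s : K), C (b.map (fun x => x - s)) = C b := fun b s => hC _ _ (by simp)
  simp only [e]
  have e1 : ∀ a b c : List K, hd (fun c0 c' => S (a ++ c0 :: c') * C b) c =
      S (a ++ c) * C b - (if c = [] then S (a ++ c) * C b else 0) := by
    intro a b c; cases c <;> simp [hd_nil, hd_cons]
  have e2 : ∀ a b c : List K, ls (fun z a' => S (a' ++ z :: c) * C b) a =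
      S (a ++ c) * C b - (if a = [] then S (a ++ c) * C b else 0) := by
    intro a b c
    rcases List.eq_nil_or_concat a with rfl | ⟨a, x, rfl⟩
    · simp [ls_nil]
    · simp [ls_concat]
  simp only [e1, e2, S2_sub]
  have e3 : S2 w (fun a r => S2 r (fun b c => if a = [] then S (a ++ c) * C b else 0)) =
      S2 w (fun b c => C b * S c) := by
    have : ∀ a r, S2 r (fun b c => if a = [] then S (a ++ c) * C b else 0) =
      if a = [] then S2 r (fun b c => S (a ++ c) * C b) else 0 := by
      intro a r; split_ifs
      · rfl
      · exact S2_zero _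
    simp only [this]
    rw [S2_left_nil w (fun a r => S2 r (fun b c => S (a ++ c) * C b))]
    simp [mul_comm]
  have e4 : S2 w (fun a r => S2 r (fun b c => if c = [] then S (a ++ c) * C b else 0)) =
      S2 w (fun a b => S a * C b) := by
    congr 1; funext a r
    rw [S2_right_nil r (fun b c => S (a ++ c) * C b)]
    simp
  rw [e3, e4]; ring

theorem arit_const_right (A C : List K → K) (hC : IsConstantMould C) (hA0 : A [] = 0) (hA : PI A)
    (w : List K) : aritV (swapUV A) C w = 0 := by
  rw [aritV_eq _ _ (by rw [swapUV_nil, hA0])]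
  have : ∀ a m c, blk (fun z _ => z) (fun z b => b.map (fun x => x - z)) (swapUV A) C a m c = 0 := by
    intro a m c
    rcases m with _ | ⟨β, t'⟩
    · simp [blk, hd_nil, ls_nil]
    · rcases List.eq_nil_or_concat (β :: t') with h | ⟨t, x, h⟩
      · simp at h
      · rw [List.concat_eq_append] at h
        rw [blk, hd_cons, h, ls_concat]
        rw [hC (a ++ x :: c) (a ++ β :: c) (by simp)]
        simp only [swapUV, swapUargs_eq, ← List.map_reverse, D_map0]
        rw [PI_D hA x β t'.reverse t.reverse (by
          have := congrArg List.reverse h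
          simpa using this.symm)]
        ring
  simp only [this, S2_zero]

theorem ari_const (A C : List K → K) (hC : IsConstantMould C) (hC0 : C [] = 0) (hA0 : A [] = 0) (hA : PI A)
    (w : List K) : ariV (swapUV A) C w = 0 := by
  rw [ariV, arit_const_right A C hC hA0 hA, arit_const_left _ C hC hC0 (by rw [swapUV_nil, hA0]), lu]; ring

theorem aritV_add_right (B A A' : List K → K) (hB0 : B [] = 0) (w : List K) :
    aritV B (fun x => A x + A' x) w = aritV B A w + aritV B A' w := by
  rw [aritV_eq _ _ hB0, aritV_eq _ _ hB0, aritV_eq _ _ hB0]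
  simp only [← S2_add]
  congr 1; funext a r; congr 1; funext m c
  rcases List.eq_nil_or_concat m with rfl | ⟨b, z, hm⟩
  · simp [blk, hd_nil, ls_nil]
  · cases m with
    | nil => simp at hm
    | cons x t =>
      simp only [blk, hd_cons]
      rw [hm, List.concat_eq_append, ls_concat, ls_concat, ls_concat]; ring

theorem aritV_add_left (B B' A : List K → K) (hB0 : B [] = 0) (hB0' : B' [] = 0) (w : List K) :
    aritV (fun x => B x + B' x) A w = aritV B A w + aritV B' A w := by
  rw [aritV_eq _ _ (by simp [hB0, hB0']), aritV_eq _ _ hB0, aritV_eq _ _ hB0']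
  simp only [← S2_add]
  congr 1; funext a r; congr 1; funext m c
  rcases List.eq_nil_or_concat m with rfl | ⟨b, z, hm⟩
  · simp [blk, hd_nil, ls_nil]
  · cases m with
    | nil => simp at hm
    | cons x t =>
      simp only [blk, hd_cons]
      rw [hm, List.concat_eq_append, ls_concat, ls_concat, ls_concat]; ring

theorem ariV_add_right (A B B' : List K → K) (hA0 : A [] = 0) (hB0 : B [] = 0) (hB0' : B' [] = 0) (w : List K) :
    ariV A (fun x => B x + B' x) w = ariV A B w + ariV A B' w := by
  simp only [ariV, lu, mu_eq, aritV_add_right A B B' hA0, aritV_add_left B B' A hB0 hB0',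
    mul_add, add_mul, S2_add]
  ring

theorem ariV_antisymm (A B : List K → K) (w : List K) : ariV A B w = - ariV B A w := by
  simp only [ariV, lu]; ring

theorem PI_const {C : List K → K} (hC : IsConstantMould C) : PI C := fun x y t _ => hC _ _ (by simp)

theorem swap_const {C : List K → K} (hC : IsConstantMould C) : swapUV C = C := by
  funext w; exact hC _ _ (by simp [swapUargs_eq, D_length])

theorem PI_add {A B : List K → K} (hA : PI A) (hB : PI B) : PI (fun w => A w + B w) := fun x y t h => by
  simp only [hA x y t h, hB x y t h]

theorem ari_mod_const (A B C E : List K → K) (hA0 : A [] = 0) (hB0 : B [] = 0) (hC0 : C [] = 0) (hE0 : E [] = 0)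
    (hA : PI A) (hB : PI B) (hC : IsConstantMould C) (hE : IsConstantMould E) (w : List K) :
    ariV (fun x => swapUV A x + C x) (fun x => swapUV B x + E x) w = ariV (swapUV A) (swapUV B) w := by
  have sA := swapUV_nil A
  have sB := swapUV_nil B
  rw [hA0] at sA; rw [hB0] at sB
  have h1 : (fun x => swapUV A x + C x) = swapUV (fun x => A x + C x) := by
    funext x; have := congrFun (swap_const hC) x; simp only [swapUV] at this ⊢; rw [this]
  rw [ariV_add_right _ _ _ (by simp [sA, hC0]) sB hE0]
  have z1 : ariV (fun x => swapUV A x + C x) E w = 0 := by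
    rw [h1]; exact ari_const _ E hE hE0 (by simp [hA0, hC0]) (PI_add hA (PI_const hC)) w
  rw [z1, add_zero, ariV_antisymm, ariV_add_right _ _ _ sB sA hC0, ari_const B C hC hC0 hB0 hB,
    add_zero, ← ariV_antisymm]

/-! ### Push-invariance -/

theorem mantar_aux {A : List K → K} (hA : Alternal A) (q p : List K) (x : K) :
    Sh p q (fun w => A (x :: w)) = (-1) ^ q.length * A (q.reverse ++ x :: p) := by
  induction q generalizing p x with
  | nil => simp [Sh_nil_right]
  | cons y q ih =>
    have h := (alt_iff A).1 hA (x :: p) (y :: q) (by simp) (by simp)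
    rw [Sh_cons, ih (x :: p) y] at h
    rw [eq_neg_of_add_eq_zero_left h]
    simp [pow_succ]

theorem mantar_inv {A : List K → K} (hA : Alternal A) (w : List K) (hw : w ≠ []) :
    A w = (-1) ^ (w.length + 1) * A w.reverse := by
  obtain ⟨x, q, rfl⟩ := List.exists_cons_of_ne_nil hw
  have := mantar_aux hA q [] x
  rw [Sh_nil_left] at this
  rw [this]; simp [pow_succ]

theorem D_reverse_aux (p x : K) (t : List K) :
    (D p (x :: t).reverse).reverse = (D x t).map (fun y => -y) ++ [lst x t - p] := by
  induction t generalizing x with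
  | nil => simp [D_cons, D_nil, lst]
  | cons y t ih =>
    have h : (x :: y :: t).reverse = (y :: t).reverse ++ [x] := by simp
    have h2 : lst p (y :: t).reverse = y := by rw [List.reverse_cons, lst_concat]
    rw [h, D_append, List.reverse_append, ih, h2]
    simp [D_cons, D_nil, lst]

/-- the sum-zero cyclic relation -/
theorem cyc_rel {A C : List K → K} (hA : Alternal A) (hC : IsConstantMould C)
    (hS : Alternal (fun w => swapUV A w + C w)) (z : List K) (hz : z ≠ []) (x0 : K)
    (h : x0 + (D 0 z).sum = 0) :
    A (x0 :: D 0 z).tail = A (((x0 :: D 0 z).rotate 1).map (fun y => -y)).tail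
      + ((-1) ^ (z.length + 1) - 1) * C z := by
  have h1 := mantar_inv hS z.reverse (by simpa using hz)
  have h2 := mantar_inv hA (D 0 z.reverse) (by
    intro h; have := congrArg List.length h; simp [D_length] at this; exact hz this)
  simp only [swapUV, swapUargs_eq, List.reverse_reverse, List.length_reverse] at h1
  rw [hC z.reverse z (by simp), h2, D_length, List.length_reverse] at h1
  obtain ⟨x, t, rfl⟩ := List.exists_cons_of_ne_nil hz
  rw [D_reverse_aux] at h1
  have h3 : ((-1 : K) ^ ((x :: t).length + 1)) * (-1) ^ ((x :: t).length + 1) = 1 := by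
    rw [← mul_pow]; simp
  have h4 : lst x t - 0 = - x0 := by
    rw [D_sum] at h; simp only [lst] at h; linear_combination h
  rw [h4] at h1
  have h5 : (((x0 :: D 0 (x :: t)).rotate 1).map (fun y => -y)).tail = (D x t).map (fun y => -y) ++ [-x0] := by
    simp [D_cons]
  rw [h5, List.tail_cons]
  linear_combination h1 + A (map (fun y => -y) (D x t) ++ [-x0]) * h3

theorem exists_D (p : K) (u : List K) : ∃ z, D p z = u := by
  induction u generalizing p with
  | nil => exact ⟨[], rfl⟩
  | cons x u ih =>
    obtain ⟨z, hz⟩ := ih (x + p)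
    exact ⟨(x + p) :: z, by simp [D_cons, hz]⟩

/-- negation of all letters -/
def ng (l : List K) : List K := l.map (fun y => -y)

theorem ng_ng (l : List K) : ng (ng l) = l := by simp [ng, Function.comp_def]
theorem ng_length (l : List K) : (ng l).length = l.length := by simp [ng]
theorem ng_rotate (l : List K) (n : ℕ) : (ng l).rotate n = ng (l.rotate n) := by simp [ng, List.map_rotate]
theorem ng_sum (l : List K) : (ng l).sum = - l.sum := by
  induction l with
  | nil => simp [ng]
  | cons x l ih => simp only [ng, List.map_cons, List.sum_cons] at ih ⊢; rw [ih]; ring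
theorem rot_sum (l : List K) (n : ℕ) : (l.rotate n).sum = l.sum := (List.rotate_perm l n).sum_eq
theorem ng_iter_length (l : List K) (n : ℕ) : (ng^[n] l).length = l.length := by
  induction n with
  | zero => rfl
  | succ n ih => rw [Function.iterate_succ_apply', ng_length, ih]
theorem ng_iter_rotate (l : List K) (n m : ℕ) : (ng^[n] l).rotate m = ng^[n] (l.rotate m) := by
  induction n with
  | zero => rfl
  | succ n ih => rw [Function.iterate_succ_apply', Function.iterate_succ_apply', ng_rotate, ih]
theorem ng_iter_sum (l : List K) (n : ℕ) (h : l.sum = 0) : (ng^[n] l).sum = 0 := by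
  induction n with
  | zero => exact h
  | succ n ih => rw [Function.iterate_succ_apply', ng_sum, ih, neg_zero]
theorem ng_even (l : List K) (n : ℕ) (h : Even n) : ng^[n] l = l := by
  have : Function.Involutive (ng (K := K)) := ng_ng
  rw [this.iterate_even h]; rfl
theorem ng_odd (l : List K) (n : ℕ) (h : Odd n) : ng^[n] l = ng l := by
  have : Function.Involutive (ng (K := K)) := ng_ng
  rw [this.iterate_odd h]

theorem cyc_rel' {A C : List K → K} (hA : Alternal A) (hC : IsConstantMould C)
    (hS : Alternal (fun w => swapUV A w + C w)) (l m : List K) (hl : 2 ≤ l.length) (hm : m.length + 1 = l.length)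
    (h : l.sum = 0) :
    A l.tail = A (ng (l.rotate 1)).tail + ((-1) ^ l.length - 1) * C m := by
  rcases l with _ | ⟨x0, u⟩
  · simp at hl
  obtain ⟨z, rfl⟩ := exists_D 0 u
  have hlen : z.length = m.length := by simpa [D_length] using hm.symm
  have := cyc_rel hA hC hS z (by rintro rfl; simp [D_nil] at hl) x0 (by simpa using h)
  rw [this, hC z m hlen]
  simp [ng, D_length]

theorem cyc_iter {A C : List K → K} (hA : Alternal A) (hC : IsConstantMould C)
    (hS : Alternal (fun w => swapUV A w + C w)) (l m : List K) (hl : 2 ≤ l.length) (hm : m.length + 1 = l.length)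
    (h : l.sum = 0) (n : ℕ) :
    A l.tail = A (ng^[n] (l.rotate n)).tail + n * (((-1) ^ l.length - 1) * C m) := by
  induction n with
  | zero => simp
  | succ n ih =>
    rw [ih, cyc_rel' hA hC hS (ng^[n] (l.rotate n)) m (by rwa [ng_iter_length, List.length_rotate])
      (by rwa [ng_iter_length, List.length_rotate]) (ng_iter_sum _ _ (by rwa [rot_sum]))]
    rw [ng_iter_length, List.length_rotate, ng_iter_rotate, List.rotate_rotate, Function.iterate_succ_apply']
    push_cast; ring

theorem const_zero {A C : List K → K} (hA : Alternal A) (hC : IsConstantMould C)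
    (hS : Alternal (fun w => swapUV A w + C w)) (l m : List K) (hl : 2 ≤ l.length) (hm : m.length + 1 = l.length)
    (h : l.sum = 0) : ((-1) ^ l.length - 1) * C m = 0 := by
  have := cyc_iter hA hC hS l m hl hm h (l.length * 2)
  rw [ng_even _ _ (by simp), List.rotate_length_mul] at this
  have h2 : ((l.length * 2 : ℕ) : K) * (((-1) ^ l.length - 1) * C m) = 0 := by linear_combination -this
  rcases mul_eq_zero.1 h2 with h3 | h3
  · exfalso
    have : l.length * 2 = 0 := by exact_mod_cast h3
    omega
  · exact h3

theorem cyc_ng {A C : List K → K} (hA : Alternal A) (hC : IsConstantMould C)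
    (hS : Alternal (fun w => swapUV A w + C w)) (l : List K) (hl : 2 ≤ l.length)
    (h : l.sum = 0) : A l.tail = A (ng (l.rotate 1)).tail := by
  have hm : l.tail.length + 1 = l.length := by simp; omega
  rw [cyc_rel' hA hC hS l l.tail hl hm h, const_zero hA hC hS l l.tail hl hm h, add_zero]

/-- vanishing of the odd part -/
theorem odd_part_zero {A : List K → K} (hA : Alternal A)
    (hrot : ∀ l : List K, 2 ≤ l.length → l.sum = 0 → A (l.rotate 1).tail = - A l.tail)
    (x0 x1 x2 : K) (t : List K) (h : (x0 :: x1 :: x2 :: t).sum = 0) : A (x1 :: x2 :: t) = 0 := by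
  have h1 := (alt_iff A).1 hA [x1] (x2 :: t) (by simp) (by simp)
  rw [Sh_cons, Sh_nil_left] at h1
  have h2 := (alt_iff A).1 hA [x1] (t ++ [x0]) (by simp) (by simp)
  rw [Sh_single_concat] at h2
  have h3 : Sh [x1] t (fun w => A (x2 :: w)) = Sh [x1] t (fun w => - A (w ++ [x0])) := by
    apply Sh_congr
    intro w hw
    have := hrot (x0 :: x2 :: w) (by simp) (by
      simp only [List.sum_cons, hw.sum_eq] at h ⊢
      simp only [List.cons_append, List.nil_append, List.sum_cons]
      linear_combination h)
    simp at this
    rw [this, neg_neg]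
  rw [h3, Sh_neg] at h1
  have e1 := hrot (x0 :: x1 :: x2 :: t) (by simp) h
  have e2 := hrot ((x0 :: x1 :: x2 :: t).rotate 1) (by simp) (by rw [rot_sum, h])
  rw [e1] at e2
  simp at e2
  rw [e2] at h2
  have : (2 : K) * A (x1 :: x2 :: t) = 0 := by linear_combination h1 + h2
  simpa using this

theorem cyc_inv {A C : List K → K} (hA : Alternal A) (hev : ∀ x : K, A [-x] = A [x]) (hC : IsConstantMould C)
    (hS : Alternal (fun w => swapUV A w + C w)) (l : List K) (hl : 2 ≤ l.length)
    (h : l.sum = 0) : A l.tail = A (l.rotate 1).tail := by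
  have main : A l.tail = A (ng l).tail := by
    rcases Nat.even_or_odd l.length with he | ho
    · have hA' : Alternal (fun w => A w - A (ng w)) := alt_sub hA (alt_map hA _)
      rcases l with _ | ⟨x0, _ | ⟨x1, _ | ⟨x2, t⟩⟩⟩
      · simp at hl
      · simp at hl
      · simp [ng, hev]
      · have := odd_part_zero hA' (by
          intro l hl h
          have e1 := cyc_ng hA hC hS l hl h
          have e2 := cyc_ng hA hC hS (ng l) (by rwa [ng_length]) (by rw [ng_sum, h, neg_zero])
          rw [ng_rotate, ng_ng] at e2
          have e3 : ∀ l : List K, ng l.tail = (ng l).tail := fun l => by simp [ng]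
          simp only [e3]
          rw [← e1, ← e2]; ring) x0 x1 x2 t h
        have := sub_eq_zero.1 this
        simpa [ng] using this
    · have hm : l.tail.length + 1 = l.length := by simp; omega
      have := cyc_iter hA hC hS l l.tail hl hm h l.length
      rw [const_zero hA hC hS l l.tail hl hm h, ng_odd _ _ ho, List.rotate_length] at this
      simpa using this
  rw [main, cyc_ng hA hC hS (ng l) (by rwa [ng_length]) (by rw [ng_sum, h, neg_zero]), ng_rotate, ng_ng]

theorem PI_of {A C : List K → K} (hA : Alternal A) (hev : ∀ x : K, A [-x] = A [x]) (hC : IsConstantMould C)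
    (hS : Alternal (fun w => swapUV A w + C w)) : PI A := by
  intro x y t h
  have := cyc_inv hA hev hC hS (x :: y :: t) (by simp) (by simp only [List.sum_cons]; linear_combination h)
  simpa using this

theorem fix_const {S C : List K → K} (hC : IsConstantMould C) (hS : Alternal (fun w => S w + C w)) :
    ∃ C' : List K → K, IsConstantMould C' ∧ C' [] = 0 ∧ Alternal (fun w => S w + C' w) := by
  refine ⟨fun w => if w = [] then 0 else C w, ?_, by simp, ?_⟩
  · intro w w' h
    by_cases hw : w = []
    · subst hw
      have : w' = [] := List.length_eq_zero_iff.1 (by simpa using h.symm)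
      simp [this]
    · have : w' ≠ [] := by
        rintro rfl; exact hw (List.length_eq_zero_iff.1 (by simpa using h))
      simp [hw, this, hC w w' h]
  · rw [alt_iff] at hS ⊢
    intro u v hu hv
    rw [← hS u v hu hv]
    apply Sh_congr
    intro w hw
    have : w ≠ [] := by
      rintro rfl
      have := hw.nil_eq
      simp at this
      exact hu this.1
    simp [this]

theorem star_bracket (A B : List K → K) (hA : InALstarAL A) (hB : InALstarAL B) : InALAL (ariU A B) := by
  obtain ⟨hA0, hAa, ⟨C₀, hC₀, hSA₀⟩, hAe⟩ := hA
  obtain ⟨hB0, hBa, ⟨E₀, hE₀, hSB₀⟩, hBe⟩ := hB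
  have pA := PI_of hAa hAe hC₀ hSA₀
  have pB := PI_of hBa hBe hE₀ hSB₀
  obtain ⟨C, hC, hC0, hSA⟩ := fix_const hC₀ hSA₀
  obtain ⟨E, hE, hE0, hSB⟩ := fix_const hE₀ hSB₀
  refine ⟨?_, alt_ariU hAa hBa hA0 hB0, ?_, ?_⟩
  · simp [ariU, aritU_eq _ _ hA0, aritU_eq _ _ hB0, S2_nil, blk, hd_nil, ls_nil, lu, mu_eq, hA0]
  · have e : swapUV (ariU A B) = ariV (fun x => swapUV A x + C x) (fun x => swapUV B x + E x) := by
      funext w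
      rw [ari_mod_const A B C E hA0 hB0 hC0 hE0 pA pB hC hE, swap_ari A B hA0 hB0 pA pB]; rfl
    rw [e]
    exact alt_ariV hSA hSB (by simp [swapUV_nil, hA0, hC0]) (by simp [swapUV_nil, hB0, hE0])
  · intro x
    have : ∀ y : K, ariU A B [y] = 0 := by
      intro y
      simp [ariU, aritU_eq _ _ hA0, aritU_eq _ _ hB0, S2_nil, S2_cons, blk, hd_nil, hd_cons, ls_single, ls_nil, lu, mu_eq, hA0, hB0]
    rw [this, this]

theorem alal_star {A : List K → K} (hA : InALAL A) : InALstarAL A := by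
  obtain ⟨h0, h1, h2, h3⟩ := hA
  exact ⟨h0, h1, ⟨fun _ => 0, fun _ _ _ => rfl, by simpa using h2⟩, h3⟩

/-- ARI_{al/al} and ARI_{al*al} are Lie subalgebras under the ari-bracket,
and the bracket of two elements of ARI_{al*al} lies in ARI_{al/al}. -/
theorem alal_and_alstaral_closed_under_ari :
    (∀ A B : List K → K, InALAL A → InALAL B → InALAL (ariU A B)) ∧
    (∀ A B : List K → K, InALstarAL A → InALstarAL B → InALstarAL (ariU A B)) ∧
    (∀ A B : List K → K, InALstarAL A → InALstarAL B → InALAL (ariU A B)) := by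
  refine ⟨fun A B hA hB => star_bracket A B (alal_star hA) (alal_star hB),
    fun A B hA hB => alal_star (star_bracket A B hA hB), star_bracket⟩
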